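/- The magnetic Wigner transform, defined for K ∈ S(ℝ^d×ℝ^d, B(H,H')) by (W^A K)(x,ξ) := ∫_{ℝ^d} e^{−iy·ξ} e^{−i(λ/ε)Γ_A(x−(ε/2)y, x+(ε/2)y)} K(x/ε + y/2, x/ε − y/2) dy, is a topological vector space isomorphism S(ℝ^d×ℝ^d, B(H,H')) → S(ℝ^d×ℝ^d, B(H,H')), and it is the two-sided inverse of the magnetic kernel map f ↦ K^A_f, where K^A_f(x,y) := e^{−i(λ/ε)Γ_A(εx,εy)} (2π)^{−d} ∫_{ℝ^d} e^{−i(y−x)·η} f((ε/2)(x+y), η) dη. -/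

import Mathlib

open MeasureTheory Complex SchwartzMap
open scoped Real ENNReal NNReal

set_option maxHeartbeats 1000000
set_option synthInstance.maxHeartbeats 1000000

noncomputable section

local notation "⟪" x ", " y "⟫_ℝ" => @inner ℝ _ _ x y
local notation "⟪" x ", " y "⟫_ℂ" => @inner ℂ _ _ x y

/-- Euclidean configuration space. -/
abbrev Ed (d : ℕ) : Type := EuclideanSpace ℝ (Fin d)

/-- Line integral of the vector potential `A` along the segment `[x, y]`. -/
def lineInt {d : ℕ} (A : Ed d → Ed d) (x y : Ed d) : ℝ :=
  ∫ s in (0:ℝ)..(1:ℝ), ⟪A (x + s • (y - x)), y - x⟫_ℝ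

/-- The phase `e^{-i(y-x)·η} e^{-i(λ/ε)Γ_A(εx,εy)}` of the magnetic Weyl quantization. -/
def wPhase {d : ℕ} (ε lam : ℝ) (A : Ed d → Ed d) (x y η : Ed d) : ℂ :=
  Complex.exp (-Complex.I * ((⟪y - x, η⟫_ℝ : ℝ) : ℂ)) *
    Complex.exp (-Complex.I * (((lam / ε) * lineInt A (ε • x) (ε • y) : ℝ) : ℂ))

/-- Magnetic Weyl quantization of an operator-valued symbol (absolutely convergent version,
with the momentum integral innermost, suitable for Schwartz-class symbols). -/
def opA {d : ℕ} {H H' : Type*} [NormedAddCommGroup H] [NormedSpace ℂ H]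
    [NormedAddCommGroup H'] [NormedSpace ℂ H']
    (ε lam : ℝ) (A : Ed d → Ed d) (f : Ed d × Ed d → (H →L[ℂ] H')) (Ψ : Ed d → H) :
    Ed d → H' :=
  fun x => (((2 * Real.pi) ^ d)⁻¹ : ℝ) •
    ∫ y : Ed d, ∫ η : Ed d, wPhase ε lam A x y η • f ((ε / 2) • (x + y), η) (Ψ y)

/-- Magnetic Weyl quantization as an (iterated, oscillatory) integral with the momentum
integral outermost; this realizes the oscillatory integral for Hörmander-class symbols. -/
def opW {d : ℕ} {H H' : Type*} [NormedAddCommGroup H] [NormedSpace ℂ H]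
    [NormedAddCommGroup H'] [NormedSpace ℂ H']
    (ε lam : ℝ) (A : Ed d → Ed d) (f : Ed d × Ed d → (H →L[ℂ] H')) (Ψ : Ed d → H) :
    Ed d → H' :=
  fun x => (((2 * Real.pi) ^ d)⁻¹ : ℝ) •
    ∫ η : Ed d, ∫ y : Ed d, wPhase ε lam A x y η • f ((ε / 2) • (x + y), η) (Ψ y)

/-- Directional derivative of a phase-space function. -/
def dirD {d : ℕ} {F : Type*} [NormedAddCommGroup F] [NormedSpace ℝ F]
    (v : Ed d × Ed d) (g : Ed d × Ed d → F) : Ed d × Ed d → F :=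
  fun p => fderiv ℝ g p v

/-- Directions corresponding to the multi-indices `a` (position) and `α` (momentum). -/
def mkDirs {d : ℕ} (a α : List (Fin d)) : List (Ed d × Ed d) :=
  (a.map fun j => ((EuclideanSpace.single j (1:ℝ) : Ed d), (0 : Ed d))) ++
    α.map fun j => ((0 : Ed d), (EuclideanSpace.single j (1:ℝ) : Ed d))

/-- The iterated partial derivative `∂_x^a ∂_ξ^α f`. -/
def mDeriv {d : ℕ} {F : Type*} [NormedAddCommGroup F] [NormedSpace ℝ F]
    (a α : List (Fin d)) (f : Ed d × Ed d → F) : Ed d × Ed d → F :=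
  (mkDirs a α).foldr dirD f

/-- The Japanese bracket `⟨ξ⟩ = (1+|ξ|²)^{1/2}`. -/
def jb {d : ℕ} (ξ : Ed d) : ℝ := Real.sqrt (1 + ‖ξ‖ ^ 2)

/-- Operator-valued Hörmander class `S^m_{ρ,δ}(B(H,H'))`. -/
structure IsHormander {d : ℕ} {H H' : Type*} [NormedAddCommGroup H] [NormedSpace ℂ H]
    [NormedAddCommGroup H'] [NormedSpace ℂ H'] (m ρ δ : ℝ)
    (f : Ed d × Ed d → (H →L[ℂ] H')) : Prop where
  smooth : ContDiff ℝ (⊤ : ℕ∞) f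
  bound : ∀ a α : List (Fin d), ∃ C : ℝ, ∀ p : Ed d × Ed d,
    ‖mDeriv a α f p‖ ≤ C * jb p.2 ^ (m - ρ * (α.length : ℝ) + δ * (a.length : ℝ))

/-- `A` is smooth with polynomially bounded derivatives of all orders. -/
def IsPolyVF {d : ℕ} (A : Ed d → Ed d) : Prop :=
  ContDiff ℝ (⊤ : ℕ∞) A ∧ ∀ n : ℕ, ∃ C : ℝ, ∃ k : ℕ, ∀ x, ‖iteratedFDeriv ℝ n A x‖ ≤ C * (1 + ‖x‖) ^ k

/-- Components `B_{jl} = ∂_j A_l − ∂_l A_j` of the magnetic field `B = dA`. -/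
def Bcomp {d : ℕ} (A : Ed d → Ed d) (x : Ed d) (j l : Fin d) : ℝ :=
  fderiv ℝ (fun z => A z l) x (EuclideanSpace.single j (1:ℝ)) -
    fderiv ℝ (fun z => A z j) x (EuclideanSpace.single l (1:ℝ))

/-- The magnetic field `B = dA` is bounded with bounded derivatives of all orders. -/
def IsBoundedField {d : ℕ} (A : Ed d → Ed d) : Prop :=
  ∀ (j l : Fin d) (n : ℕ), ∃ C : ℝ, ∀ x, ‖iteratedFDeriv ℝ n (fun z => Bcomp A z j l) x‖ ≤ C


/-- The magnetic kernel map `f ↦ K^A_f`. -/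
def magKernel {d : ℕ} {H H' : Type*} [NormedAddCommGroup H] [NormedSpace ℂ H]
    [NormedAddCommGroup H'] [NormedSpace ℂ H']
    (ε lam : ℝ) (A : Ed d → Ed d) (f : Ed d × Ed d → (H →L[ℂ] H')) :
    Ed d × Ed d → (H →L[ℂ] H') :=
  fun q =>
    Complex.exp (-Complex.I * (((lam / ε) * lineInt A (ε • q.1) (ε • q.2) : ℝ) : ℂ)) •
      ((((2 * Real.pi) ^ d)⁻¹ : ℝ) •
        ∫ η : Ed d,
          Complex.exp (-Complex.I * ((⟪q.2 - q.1, η⟫_ℝ : ℝ) : ℂ)) •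
            f ((ε / 2) • (q.1 + q.2), η))

/-- The magnetic Wigner transform of an operator-valued kernel. -/
def wignerT {d : ℕ} {H H' : Type*} [NormedAddCommGroup H] [NormedSpace ℂ H]
    [NormedAddCommGroup H'] [NormedSpace ℂ H']
    (ε lam : ℝ) (A : Ed d → Ed d) (K : Ed d × Ed d → (H →L[ℂ] H')) :
    Ed d × Ed d → (H →L[ℂ] H') :=
  fun p =>
    ∫ y : Ed d,
      (Complex.exp (-Complex.I * ((⟪y, p.2⟫_ℝ : ℝ) : ℂ)) *
        Complex.exp (-Complex.I *
          (((lam / ε) * lineInt A (p.1 - (ε / 2) • y) (p.1 + (ε / 2) • y) : ℝ) : ℂ))) •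
        K (ε⁻¹ • p.1 + (2:ℝ)⁻¹ • y, ε⁻¹ • p.1 - (2:ℝ)⁻¹ • y)

/-!
In the coordinates `(x, y) ↦ (x/ε + y/2, x/ε - y/2)` the magnetic Wigner transform is
multiplication by a unimodular phase followed by a Fourier transform in `y` alone, so it suffices
that each of these three operations is an automorphism of Schwartz space. The phase is a temperate
multiplier because `Γ_A` is an integral of a temperate function over a compact interval. For the
partial Fourier transform the point is that its derivative is again a partial Fourier transform,
of the operator-valued Schwartz function `fourierDeriv K`; by induction over all codomains only the
decay of the transform itself has to be estimated. Reversing the three operations gives the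
magnetic kernel map, since `Γ_A` is antisymmetric.
-/

section TemperateGrowth

universe u v

theorem hasTemperateGrowth_fderiv {D V : Type*} [NormedAddCommGroup D] [NormedSpace ℝ D]
    [NormedAddCommGroup V] [NormedSpace ℝ V] {g : D → V} (hg : g.HasTemperateGrowth) :
    (fderiv ℝ g).HasTemperateGrowth := by
  refine ⟨hg.1.fderiv_right (m := (⊤ : ℕ∞)) (by simp), fun n ↦ ?_⟩
  obtain ⟨k, C, h⟩ := hg.2 (n + 1)
  exact ⟨k, C, fun x ↦ by simpa only [norm_iteratedFDeriv_fderiv] using h x⟩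

section ParametricIntegral

variable {D : Type u} [NormedAddCommGroup D] [NormedSpace ℝ D]
  {V : Type max u v} [NormedAddCommGroup V] [NormedSpace ℝ V] {g : ℝ × D → V}

/-- The partial derivative of `g : ℝ × D → V` in its second argument, again as a function on
`ℝ × D`; it is the integrand of the derivative of `p ↦ ∫ s in a..b, g (s, p)`. -/
def fderivSnd (g : ℝ × D → V) (q : ℝ × D) : D →L[ℝ] V :=
  (fderiv ℝ g q).comp (ContinuousLinearMap.inr ℝ ℝ D)

theorem hasTemperateGrowth_fderivSnd (hg : g.HasTemperateGrowth) :
    (fderivSnd g).HasTemperateGrowth :=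
  ((ContinuousLinearMap.compL ℝ D (ℝ × D) V).flip
    (ContinuousLinearMap.inr ℝ ℝ D)).hasTemperateGrowth.comp (hasTemperateGrowth_fderiv hg)

theorem exists_norm_le_of_mem_uIcc (hg : g.HasTemperateGrowth) (a b : ℝ) :
    ∃ (k : ℕ) (C : ℝ), 0 ≤ C ∧ ∀ s ∈ Set.uIcc a b, ∀ p, ‖g (s, p)‖ ≤ C * (1 + ‖p‖) ^ k := by
  obtain ⟨k, C, hC, h⟩ := hg.norm_iteratedFDeriv_le_uniform 0
  set R := max |a ⊓ b| |a ⊔ b|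
  have hR : 0 ≤ R := (abs_nonneg _).trans (le_max_left _ _)
  refine ⟨k, C * (1 + R) ^ k, by positivity, fun s hs p ↦ ?_⟩
  have hsR : ‖s‖ ≤ R := abs_le_max_abs_abs hs.1 hs.2
  have hnorm : 1 + ‖(s, p)‖ ≤ (1 + R) * (1 + ‖p‖) := by
    have hmax : ‖(s, p)‖ ≤ R + ‖p‖ := by
      rw [Prod.norm_def]
      exact max_le (by linarith [norm_nonneg p]) (by linarith)
    nlinarith [norm_nonneg p]
  calc ‖g (s, p)‖ ≤ C * (1 + ‖(s, p)‖) ^ k := by simpa using h 0 le_rfl (s, p)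
    _ ≤ C * ((1 + R) * (1 + ‖p‖)) ^ k := by gcongr
    _ = C * (1 + R) ^ k * (1 + ‖p‖) ^ k := by rw [mul_pow, mul_assoc]

theorem hasFDerivAt_intervalIntegral (hg : g.HasTemperateGrowth) (a b : ℝ) (p : D) :
    HasFDerivAt (fun p ↦ ∫ s in a..b, g (s, p)) (∫ s in a..b, fderivSnd g (s, p)) p := by
  obtain ⟨k, C, hC, hbound⟩ := exists_norm_le_of_mem_uIcc (hasTemperateGrowth_fderivSnd hg) a b
  have hg_cont : Continuous g := hg.1.continuous
  have hg'_cont : Continuous (fderivSnd g) := (hasTemperateGrowth_fderivSnd hg).1.continuous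
  refine intervalIntegral.hasFDerivAt_integral_of_dominated_of_fderiv_le
    (F := fun p s ↦ g (s, p)) (F' := fun p s ↦ fderivSnd g (s, p))
    (bound := fun _ ↦ C * (1 + (‖p‖ + 1)) ^ k) (Metric.ball_mem_nhds p one_pos)
    (.of_forall fun x ↦ ?_) (Continuous.intervalIntegrable (by fun_prop) a b)
    (Continuous.aestronglyMeasurable (by fun_prop)) (.of_forall fun s hs x hx ↦ ?_)
    (continuous_const.intervalIntegrable a b) (.of_forall fun s _ x _ ↦ ?_)
  · exact Continuous.aestronglyMeasurable (by fun_prop)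
  · have hx' : ‖x‖ ≤ ‖p‖ + 1 := by
      linarith [norm_le_norm_add_norm_sub' x p, mem_ball_iff_norm.1 hx]
    exact (hbound s (Set.uIoc_subset_uIcc hs) x).trans (by gcongr)
  · have hgx : HasFDerivAt g (fderiv ℝ g (s, x)) (s, x) :=
      (hg.1.differentiable (by simp) _).hasFDerivAt
    exact hgx.comp x (hasFDerivAt_prodMk_right s x)

theorem fderiv_intervalIntegral (hg : g.HasTemperateGrowth) (a b : ℝ) :
    fderiv ℝ (fun p ↦ ∫ s in a..b, g (s, p)) = fun p ↦ ∫ s in a..b, fderivSnd g (s, p) :=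
  funext fun p ↦ (hasFDerivAt_intervalIntegral hg a b p).fderiv

theorem differentiable_intervalIntegral (hg : g.HasTemperateGrowth) (a b : ℝ) :
    Differentiable ℝ (fun p ↦ ∫ s in a..b, g (s, p)) :=
  fun p ↦ (hasFDerivAt_intervalIntegral hg a b p).differentiableAt

theorem contDiff_intervalIntegral (hg : g.HasTemperateGrowth) (a b : ℝ) (n : ℕ) :
    ContDiff ℝ n (fun p ↦ ∫ s in a..b, g (s, p)) := by
  induction n generalizing V with
  | zero => exact contDiff_zero.2 (differentiable_intervalIntegral hg a b).continuous
  | succ n ih =>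
    push_cast
    refine contDiff_succ_iff_fderiv.2 ⟨differentiable_intervalIntegral hg a b, by simp, ?_⟩
    rw [fderiv_intervalIntegral hg]
    exact ih (hasTemperateGrowth_fderivSnd hg)

theorem exists_norm_iteratedFDeriv_intervalIntegral_le (hg : g.HasTemperateGrowth) (a b : ℝ)
    (n : ℕ) : ∃ (k : ℕ) (C : ℝ), ∀ p,
      ‖iteratedFDeriv ℝ n (fun p ↦ ∫ s in a..b, g (s, p)) p‖ ≤ C * (1 + ‖p‖) ^ k := by
  induction n generalizing V with
  | zero =>
    obtain ⟨k, C, -, hbound⟩ := exists_norm_le_of_mem_uIcc hg a b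
    refine ⟨k, C * |b - a|, fun p ↦ ?_⟩
    rw [norm_iteratedFDeriv_zero, mul_right_comm]
    exact intervalIntegral.norm_integral_le_of_norm_le_const fun s hs ↦
      hbound s (Set.uIoc_subset_uIcc hs) p
  | succ n ih =>
    obtain ⟨k, C, hbound⟩ := ih (hasTemperateGrowth_fderivSnd hg)
    refine ⟨k, C, fun p ↦ ?_⟩
    rw [← norm_iteratedFDeriv_fderiv, fderiv_intervalIntegral hg]
    exact hbound p

theorem hasTemperateGrowth_intervalIntegral (hg : g.HasTemperateGrowth) (a b : ℝ) :
    (fun p ↦ ∫ s in a..b, g (s, p)).HasTemperateGrowth :=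
  ⟨contDiff_infty.2 (contDiff_intervalIntegral hg a b),
    exists_norm_iteratedFDeriv_intervalIntegral_le hg a b⟩

end ParametricIntegral

theorem iteratedDeriv_cexp_neg_I_mul (n : ℕ) :
    iteratedDeriv n (fun t : ℝ ↦ cexp (-I * t)) = fun t : ℝ ↦ (-I) ^ n * cexp (-I * t) := by
  induction n with
  | zero => simp
  | succ n ih =>
    have hlin (t : ℝ) : HasDerivAt (fun t : ℝ ↦ -I * (t : ℂ)) (-I) t := by
      simpa using (Complex.ofRealCLM.hasDerivAt (x := t)).const_mul (-I)
    ext t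
    rw [iteratedDeriv_succ, ih, ((hlin t).cexp.const_mul _).deriv]
    ring

theorem hasTemperateGrowth_cexp_neg_I_mul {D : Type*} [NormedAddCommGroup D] [NormedSpace ℝ D]
    {φ : D → ℝ} (hφ : φ.HasTemperateGrowth) :
    (fun x ↦ cexp (-I * φ x)).HasTemperateGrowth := by
  have hexp : (fun t : ℝ ↦ cexp (-I * t)).HasTemperateGrowth := by
    refine ⟨(contDiff_const.mul Complex.ofRealCLM.contDiff).cexp, fun n ↦ ⟨0, 1, fun t ↦ ?_⟩⟩
    rw [norm_iteratedFDeriv_eq_norm_iteratedDeriv, iteratedDeriv_cexp_neg_I_mul]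
    simp [Complex.norm_exp]
  exact hexp.comp hφ

end TemperateGrowth

section PartialFourier

universe u v

open scoped FourierTransform

variable {E F : Type u} [NormedAddCommGroup E] [NormedSpace ℝ E]
  [NormedAddCommGroup F]

section Slice

variable [NormedSpace ℝ F] {V : Type*} [NormedAddCommGroup V] [NormedSpace ℂ V]

theorem hasTemperateGrowth_prodMk_right (x : E) :
    (fun y : F ↦ (x, y)).HasTemperateGrowth := by
  have hsum : (fun y : F ↦ (x, y)) = fun y ↦ (x, 0) + ContinuousLinearMap.inr ℝ E F y := by
    ext y <;> simp
  exact hsum ▸ (Function.HasTemperateGrowth.const _).add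
    (ContinuousLinearMap.inr ℝ E F).hasTemperateGrowth

/-- The slice `K (x, ·)` of a Schwartz function of two variables, as a continuous linear map
in `K`. -/
def slice (x : E) : 𝓢(E × F, V) →L[ℂ] 𝓢(F, V) :=
  compCLMOfAntilipschitz ℂ (g := fun y ↦ (x, y)) (K := 1) (hasTemperateGrowth_prodMk_right x)
    (.of_le_mul_dist fun y z ↦ by simp [Prod.dist_eq])

@[simp]
theorem slice_apply (x : E) (K : 𝓢(E × F, V)) (y : F) : slice x K y = K (x, y) := rfl

theorem ext_slice {K L : 𝓢(E × F, V)} (h : ∀ x, slice x K = slice x L) : K = L :=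
  SchwartzMap.ext fun p ↦ DFunLike.congr_fun (h p.1) p.2

theorem norm_iteratedFDeriv_slice_le (K : 𝓢(E × F, V)) (n : ℕ) (x : E) (y : F) :
    ‖iteratedFDeriv ℝ n (slice x K) y‖ ≤ ‖iteratedFDeriv ℝ n K (x, y)‖ := by
  have hslice : ⇑(slice x K) = (fun q ↦ K ((x, 0) + q)) ∘ ContinuousLinearMap.inr ℝ E F := by
    ext y; simp
  have hsmooth : ContDiff ℝ n (fun q ↦ K ((x, (0 : F)) + q)) :=
    (K.smooth n).comp (contDiff_const.add contDiff_id)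
  rw [hslice, ContinuousLinearMap.iteratedFDeriv_comp_right _ hsmooth _ le_rfl,
    iteratedFDeriv_comp_add_left]
  refine (ContinuousMultilinearMap.norm_compContinuousLinearMap_le _ _).trans ?_
  have hprod : ∏ _i : Fin n, ‖ContinuousLinearMap.inr ℝ E F‖ ≤ 1 :=
    Finset.prod_le_one (fun _ _ ↦ norm_nonneg _)
      fun _ _ ↦ ContinuousLinearMap.norm_inr_le_one ℝ E F
  simpa using mul_le_of_le_one_right (norm_nonneg _) hprod

theorem norm_pow_mul_seminorm_slice_le (K : 𝓢(E × F, V)) (x : E) (k j n : ℕ) :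
    ‖x‖ ^ k * SchwartzMap.seminorm ℂ j n (slice x K) ≤ SchwartzMap.seminorm ℂ (k + j) n K := by
  have hscale : ‖x‖ ^ k * SchwartzMap.seminorm ℂ j n (slice x K) =
      SchwartzMap.seminorm ℂ j n (((‖x‖ ^ k : ℝ) : ℂ) • slice x K) := by
    simp [map_smul_eq_mul]
  rw [hscale]
  refine SchwartzMap.seminorm_le_bound ℂ j n _ (apply_nonneg _ _) fun y ↦ ?_
  have hderiv : iteratedFDeriv ℝ n (((‖x‖ ^ k : ℝ) : ℂ) • slice x K : 𝓢(F, V)) y =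
      ((‖x‖ ^ k : ℝ) : ℂ) • iteratedFDeriv ℝ n (slice x K) y :=
    iteratedFDeriv_const_smul_apply ((slice x K).smooth n).contDiffAt
  calc ‖y‖ ^ j * ‖iteratedFDeriv ℝ n (((‖x‖ ^ k : ℝ) : ℂ) • slice x K : 𝓢(F, V)) y‖
      = ‖x‖ ^ k * ‖y‖ ^ j * ‖iteratedFDeriv ℝ n (slice x K) y‖ := by
        rw [hderiv, norm_smul, Complex.norm_real, norm_pow, norm_norm]
        ring
    _ ≤ ‖(x, y)‖ ^ k * ‖(x, y)‖ ^ j * ‖iteratedFDeriv ℝ n K (x, y)‖ := by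
        gcongr
        · exact norm_fst_le (x, y)
        · exact norm_snd_le (x, y)
        · exact norm_iteratedFDeriv_slice_le K n x y
    _ ≤ SchwartzMap.seminorm ℂ (k + j) n K := by
        rw [← pow_add]
        exact K.le_seminorm ℂ (k + j) n (x, y)

theorem exists_seminorm_slice_le (k : ℕ) {q : Seminorm ℂ 𝓢(F, V)} (hq : Continuous q) :
    ∃ Q : Seminorm ℂ 𝓢(E × F, V), Continuous Q ∧ ∀ K x, ‖x‖ ^ k * q (slice x K) ≤ Q K := by
  obtain ⟨s, C, -, hs⟩ := Seminorm.bound_of_continuous (schwartz_withSeminorms ℂ F V) q hq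
  let P (m : ℕ × ℕ) : Seminorm ℂ 𝓢(E × F, V) := SchwartzMap.seminorm ℂ (k + m.1) m.2
  refine ⟨C • s.sup P, ?_, fun K x ↦ ?_⟩
  · exact (Seminorm.continuous_finsetSup fun m _ ↦
      (schwartz_withSeminorms ℂ (E × F) V).continuous_seminorm (k + m.1, m.2)).const_smul C
  have hscale (p : Seminorm ℂ 𝓢(F, V)) :
      p (((‖x‖ ^ k : ℝ) : ℂ) • slice x K) = ‖x‖ ^ k * p (slice x K) := by
    simp [map_smul_eq_mul]
  rw [← hscale q]
  refine (hs _).trans (mul_le_mul_of_nonneg_left ?_ C.2)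
  refine Seminorm.finset_sup_apply_le (apply_nonneg _ _) fun m hm ↦ ?_
  calc SchwartzMap.seminorm ℂ m.1 m.2 (((‖x‖ ^ k : ℝ) : ℂ) • slice x K)
      = ‖x‖ ^ k * SchwartzMap.seminorm ℂ m.1 m.2 (slice x K) := hscale _
    _ ≤ SchwartzMap.seminorm ℂ (k + m.1) m.2 K := norm_pow_mul_seminorm_slice_le K x k m.1 m.2
    _ ≤ s.sup P K := Seminorm.le_finset_sup_apply (p := P) hm

end Slice

variable [InnerProductSpace ℝ F] {V : Type max u v} [NormedAddCommGroup V] [NormedSpace ℂ V]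

/-- The pairing `(y, (x, η)) ↦ ⟪y, η⟫`, the phase of the partial Fourier transform. -/
def innerSnd (E F : Type*) [NormedAddCommGroup E] [NormedSpace ℝ E]
    [NormedAddCommGroup F] [InnerProductSpace ℝ F] : F →L[ℝ] E × F →L[ℝ] ℝ :=
  (innerSL ℝ).bilinearComp (.id ℝ F) (.snd ℝ E F)

variable (E F V) in
/-- Precomposition of derivatives with the projection `(v, w) ↦ (v, 0)`, which retains the
derivative in the first variable. -/
def restrictFst : (E × F →L[ℝ] V) →L[ℂ] E × F →L[ℝ] V where
  __ := ContinuousLinearMap.precomp V ((ContinuousLinearMap.inl ℝ E F).comp (.fst ℝ E F))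
  map_smul' _ _ := rfl

/-- The Schwartz function whose partial Fourier transform is the derivative of the partial
Fourier transform: `∂ₓK` in the first variable and `-2πi⟪y, ·⟫ K` in the second. -/
def fourierDeriv : 𝓢(E × F, V) →L[ℂ] 𝓢(E × F, E × F →L[ℝ] V) :=
  (postcompCLM (restrictFst E F V)).comp (fderivCLM ℂ (E × F) V) +
    (-2 * π * I) • smulRightCLM ℂ V ((innerSnd E F).comp (.snd ℝ E F))

theorem fourierDeriv_apply_apply (K : 𝓢(E × F, V)) (q v : E × F) :
    fourierDeriv K q v = fderiv ℝ K q (v.1, 0) + (-2 * π * I) • inner ℝ q.2 v.2 • K q := rfl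

theorem hasFDerivAt_fourierChar_smul (K : 𝓢(E × F, V)) (p : E × F) (y : F) :
    HasFDerivAt (fun p : E × F ↦ (𝐞 (-inner ℝ y p.2) : ℂ) • K (p.1, y))
      ((𝐞 (-inner ℝ y p.2) : ℂ) • fourierDeriv K (p.1, y)) p := by
  have hchar := Real.hasFDerivAt_fourierChar_neg_bilinear_right (innerSnd E F) y p
  have hpair : HasFDerivAt (fun p : E × F ↦ (p.1, y))
      ((ContinuousLinearMap.inl ℝ E F).comp (.fst ℝ E F)) p :=
    (hasFDerivAt_prodMk_left (𝕜 := ℝ) p.1 y).comp p (hasFDerivAt_fst (p := p))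
  have hK : HasFDerivAt (fun p : E × F ↦ K (p.1, y))
      ((fderiv ℝ K (p.1, y)).comp ((ContinuousLinearMap.inl ℝ E F).comp (.fst ℝ E F))) p :=
    (K.hasFDerivAt (p.1, y)).comp p hpair
  refine (hchar.smul hK).congr_fderiv ?_
  refine ContinuousLinearMap.ext fun v ↦ ?_
  change (𝐞 (-inner ℝ y p.2) : ℂ) • fderiv ℝ K (p.1, y) (v.1, 0) +
    (-2 * π * I * 𝐞 (-inner ℝ y p.2) * (inner ℝ y v.2 : ℝ)) • K (p.1, y) =
      (𝐞 (-inner ℝ y p.2) : ℂ) • fourierDeriv K (p.1, y) v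
  rw [fourierDeriv_apply_apply, smul_add, ← Complex.coe_smul, smul_smul, smul_smul]
  ring_nf

variable [FiniteDimensional ℝ F] [MeasurableSpace F] [BorelSpace F]

/-- The Fourier transform of `K : 𝓢(E × F, V)` in its second variable, as a plain function;
`partialFourierCLM` shows that it is again a Schwartz function. -/
def partialFourier (K : 𝓢(E × F, V)) (p : E × F) : V := 𝓕 (slice p.1 K) p.2

theorem partialFourier_eq_integral (K : 𝓢(E × F, V)) (p : E × F) :
    partialFourier K p = ∫ y, (𝐞 (-inner ℝ y p.2) : ℂ) • K (p.1, y) := by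
  rw [partialFourier, SchwartzMap.fourier_coe, Real.fourier_eq]
  rfl

theorem exists_seminorm_norm_pow_mul_fourier_le (k : ℕ) :
    ∃ q : Seminorm ℂ 𝓢(F, V), Continuous q ∧
      ∀ (f : 𝓢(F, V)) (η : F), ‖η‖ ^ k * ‖(𝓕 f : 𝓢(F, V)) η‖ ≤ q f :=
  let 𝓕L : 𝓢(F, V) →L[ℂ] 𝓢(F, V) := fourierTransformCLM ℂ
  ⟨(SchwartzMap.seminorm ℂ k 0 : Seminorm ℂ 𝓢(F, V)).comp 𝓕L.toLinearMap,
    ((schwartz_withSeminorms ℂ F V).continuous_seminorm (k, 0)).comp 𝓕L.continuous,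
    fun f η ↦ SchwartzMap.norm_pow_mul_le_seminorm ℂ (𝓕 f : 𝓢(F, V)) k η⟩

theorem exists_seminorm_partialFourier_le (k : ℕ) :
    ∃ Q : Seminorm ℂ 𝓢(E × F, V), Continuous Q ∧
      ∀ K p, ‖p‖ ^ k * ‖partialFourier K p‖ ≤ Q K := by
  obtain ⟨q₁, hq₁, hbound₁⟩ := exists_seminorm_norm_pow_mul_fourier_le (F := F) (V := V) 0
  obtain ⟨q₂, hq₂, hbound₂⟩ := exists_seminorm_norm_pow_mul_fourier_le (F := F) (V := V) k
  obtain ⟨Q₁, hQ₁, hslice₁⟩ := exists_seminorm_slice_le (E := E) k hq₁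
  obtain ⟨Q₂, hQ₂, hslice₂⟩ := exists_seminorm_slice_le (E := E) 0 hq₂
  refine ⟨Q₁ + Q₂, hQ₁.add hQ₂, fun K p ↦ ?_⟩
  have hmax : ‖p‖ ^ k ≤ ‖p.1‖ ^ k + ‖p.2‖ ^ k := by
    rw [Prod.norm_def]
    rcases max_choice ‖p.1‖ ‖p.2‖ with h | h <;> rw [h] <;> simp
  have hfst : ‖p.1‖ ^ k * ‖partialFourier K p‖ ≤ Q₁ K := by
    refine le_trans ?_ (hslice₁ K p.1)
    gcongr
    simpa [partialFourier] using hbound₁ (slice p.1 K) p.2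
  have hsnd : ‖p.2‖ ^ k * ‖partialFourier K p‖ ≤ Q₂ K :=
    (hbound₂ (slice p.1 K) p.2).trans (by simpa using hslice₂ K p.1)
  calc ‖p‖ ^ k * ‖partialFourier K p‖
      ≤ (‖p.1‖ ^ k + ‖p.2‖ ^ k) * ‖partialFourier K p‖ := by gcongr
    _ = ‖p.1‖ ^ k * ‖partialFourier K p‖ + ‖p.2‖ ^ k * ‖partialFourier K p‖ := add_mul _ _ _
    _ ≤ (Q₁ + Q₂) K := add_le_add hfst hsnd

theorem exists_integrable_norm_slice_le (K : 𝓢(E × F, V)) :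
    ∃ g : F → ℝ, Integrable g ∧ ∀ x y, ‖K (x, y)‖ ≤ g y := by
  set l := (volume : Measure F).integrablePower
  refine ⟨fun y ↦ 2 ^ l * (SchwartzMap.seminorm ℝ 0 0 K + SchwartzMap.seminorm ℝ l 0 K) *
      (1 + ‖y‖) ^ (-(l : ℝ)),
    (Measure.integrable_pow_neg_integrablePower volume).const_mul _, fun x y ↦ ?_⟩
  have hdecay : ‖y‖ ^ l * ‖K (x, y)‖ ≤ SchwartzMap.seminorm ℝ l 0 K := by
    refine le_trans ?_ (SchwartzMap.norm_pow_mul_le_seminorm ℝ K l (x, y))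
    gcongr
    exact norm_snd_le (x, y)
  simpa using pow_mul_le_of_le_of_pow_mul_le (k := 0) (norm_nonneg y) (norm_nonneg (K (x, y)))
    (SchwartzMap.norm_le_seminorm ℝ K (x, y)) (by simpa using hdecay)

theorem integrable_fourierChar_smul (K : 𝓢(E × F, V)) (p : E × F) :
    Integrable fun y ↦ (𝐞 (-inner ℝ y p.2) : ℂ) • K (p.1, y) :=
  (Real.fourierIntegral_convergent_iff p.2).2 (slice p.1 K).integrable

theorem hasFDerivAt_partialFourier (K : 𝓢(E × F, V)) (p : E × F) :
    HasFDerivAt (partialFourier K) (partialFourier (V := E × F →L[ℝ] V) (fourierDeriv K) p) p := by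
  obtain ⟨g, hg, hbound⟩ :=
    exists_integrable_norm_slice_le (V := E × F →L[ℝ] V) (fourierDeriv K)
  have hmeas := (integrable_fourierChar_smul (V := E × F →L[ℝ] V) (fourierDeriv K) p).1
  rw [funext (partialFourier_eq_integral K),
    partialFourier_eq_integral (V := E × F →L[ℝ] V) (fourierDeriv K)]
  refine hasFDerivAt_integral_of_dominated_of_fderiv_le (bound := g) Filter.univ_mem
    (.of_forall fun p ↦ (integrable_fourierChar_smul K p).1) (integrable_fourierChar_smul K p)
    hmeas (.of_forall fun y p _ ↦ ?_) hg
    (.of_forall fun y p _ ↦ hasFDerivAt_fourierChar_smul K p y)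
  rw [norm_smul, Circle.norm_coe, one_mul]
  exact hbound p.1 y

theorem fderiv_partialFourier (K : 𝓢(E × F, V)) :
    fderiv ℝ (partialFourier K) = partialFourier (V := E × F →L[ℝ] V) (fourierDeriv K) :=
  funext fun p ↦ (hasFDerivAt_partialFourier K p).fderiv

theorem differentiable_partialFourier (K : 𝓢(E × F, V)) :
    Differentiable ℝ (partialFourier K) :=
  fun p ↦ (hasFDerivAt_partialFourier K p).differentiableAt

theorem contDiff_partialFourier (K : 𝓢(E × F, V)) (n : ℕ) :
    ContDiff ℝ n (partialFourier K) := by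
  induction n generalizing V with
  | zero => exact contDiff_zero.2 (differentiable_partialFourier K).continuous
  | succ n ih =>
    push_cast
    refine contDiff_succ_iff_fderiv.2 ⟨differentiable_partialFourier K, by simp, ?_⟩
    rw [fderiv_partialFourier]
    have hderiv := ih (V := E × F →L[ℝ] V)
    exact hderiv (fourierDeriv K)

theorem exists_seminorm_iteratedFDeriv_partialFourier_le (k n : ℕ) :
    ∃ Q : Seminorm ℂ 𝓢(E × F, V), Continuous Q ∧
      ∀ K p, ‖p‖ ^ k * ‖iteratedFDeriv ℝ n (partialFourier K) p‖ ≤ Q K := by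
  induction n generalizing V with
  | zero => simpa only [norm_iteratedFDeriv_zero] using exists_seminorm_partialFourier_le k
  | succ n ih =>
    obtain ⟨Q, hQ, hbound⟩ : ∃ Q : Seminorm ℂ 𝓢(E × F, E × F →L[ℝ] V), _ := ih (V := E × F →L[ℝ] V)
    let D : 𝓢(E × F, V) →L[ℂ] 𝓢(E × F, E × F →L[ℝ] V) := fourierDeriv
    let P : Seminorm ℂ 𝓢(E × F, V) := Q.comp D.toLinearMap
    refine ⟨P, hQ.comp D.continuous, fun K p ↦ ?_⟩
    rw [← norm_iteratedFDeriv_fderiv, fderiv_partialFourier]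
    exact hbound (fourierDeriv K) p

/-- The partial Fourier transform as a continuous linear map on Schwartz space. -/
def partialFourierCLM : 𝓢(E × F, V) →L[ℂ] 𝓢(E × F, V) :=
  mkCLM partialFourier
    (fun K L p ↦ by simp [partialFourier, FourierTransform.fourier_add])
    (fun c K p ↦ by simp [partialFourier, FourierTransform.fourier_smul])
    (fun K ↦ contDiff_infty.2 (contDiff_partialFourier K))
    fun ⟨k, n⟩ ↦ by
      obtain ⟨Q, hQ, hbound⟩ :=
        exists_seminorm_iteratedFDeriv_partialFourier_le (E := E) (F := F) (V := V) k n
      obtain ⟨s, C, -, hs⟩ :=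
        Seminorm.bound_of_continuous (schwartz_withSeminorms ℂ (E × F) V) Q hQ
      exact ⟨s, C, C.2, fun K p ↦ (hbound K p).trans (hs K)⟩

theorem slice_partialFourierCLM (K : 𝓢(E × F, V)) (x : E) :
    slice x (partialFourierCLM K) = 𝓕 (slice x K) := rfl

variable (E F) in
/-- The reflection `(x, y) ↦ (x, -y)`, which turns the partial Fourier transform into its
inverse. -/
def reflectSnd : (E × F) ≃L[ℝ] E × F :=
  (ContinuousLinearEquiv.refl ℝ E).prodCongr (.neg ℝ)

/-- The inverse partial Fourier transform as a continuous linear map on Schwartz space. -/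
def partialFourierInvCLM : 𝓢(E × F, V) →L[ℂ] 𝓢(E × F, V) :=
  (compCLMOfContinuousLinearEquiv ℂ (reflectSnd E F)).comp partialFourierCLM

theorem slice_partialFourierInvCLM (K : 𝓢(E × F, V)) (x : E) :
    slice x (partialFourierInvCLM K) = 𝓕⁻ (slice x K) := by
  ext y
  rw [SchwartzMap.fourierInv_coe, Real.fourierInv_eq_fourier_neg]
  rfl

/-- The partial Fourier transform as an automorphism of Schwartz space. -/
def partialFourierCLE [CompleteSpace V] : 𝓢(E × F, V) ≃L[ℂ] 𝓢(E × F, V) :=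
  .equivOfInverse partialFourierCLM partialFourierInvCLM
    (fun K ↦ ext_slice fun x ↦ by
      rw [slice_partialFourierInvCLM, slice_partialFourierCLM,
        FourierTransform.fourierInv_fourier_eq])
    (fun K ↦ ext_slice fun x ↦ by
      rw [slice_partialFourierCLM, slice_partialFourierInvCLM,
        FourierTransform.fourier_fourierInv_eq])

end PartialFourier

section SchwartzEquivalences

variable {D E V : Type*} [NormedAddCommGroup D] [NormedSpace ℝ D] [NormedAddCommGroup E]
  [NormedSpace ℝ E] [NormedAddCommGroup V] [NormedSpace ℂ V]

/-- Precomposition with a linear equivalence, as an equivalence of Schwartz spaces. -/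
def compCLE (T : D ≃L[ℝ] E) : 𝓢(E, V) ≃L[ℂ] 𝓢(D, V) :=
  .equivOfInverse (compCLMOfContinuousLinearEquiv ℂ T) (compCLMOfContinuousLinearEquiv ℂ T.symm)
    (fun K ↦ by ext q; simp)
    (fun K ↦ by ext p; simp)

theorem smulLeftCLM_smulLeftCLM_of_mul_eq_one {u v : E → ℂ} (hu : u.HasTemperateGrowth)
    (hv : v.HasTemperateGrowth) (huv : u * v = 1) (K : 𝓢(E, V)) :
    smulLeftCLM V u (smulLeftCLM V v K) = K := by
  rw [smulLeftCLM_smulLeftCLM_apply hu hv, huv]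
  exact (DFunLike.congr_fun (smulLeftCLM_const (1 : ℂ)) K).trans (one_smul ℂ K)

/-- Multiplication by a temperate function `u` with temperate inverse `v`, as an automorphism of
Schwartz space. -/
def smulCLE (u v : E → ℂ) (hu : u.HasTemperateGrowth) (hv : v.HasTemperateGrowth)
    (huv : u * v = 1) : 𝓢(E, V) ≃L[ℂ] 𝓢(E, V) :=
  .equivOfInverse (smulLeftCLM V u) (smulLeftCLM V v)
    (smulLeftCLM_smulLeftCLM_of_mul_eq_one hv hu (mul_comm u v ▸ huv))
    (smulLeftCLM_smulLeftCLM_of_mul_eq_one hu hv huv)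

/-- The change of variables `(x, y) ↦ (x/ε + y/2, x/ε - y/2)` from center and relative position
to the two arguments of an integral kernel. -/
def wignerCoordinates (E : Type*) [NormedAddCommGroup E] [NormedSpace ℝ E] (ε : ℝ) (hε : ε ≠ 0) :
    (E × E) ≃L[ℝ] E × E :=
  let π₁ := ContinuousLinearMap.fst ℝ E E
  let π₂ := ContinuousLinearMap.snd ℝ E E
  .equivOfInverse ((ε⁻¹ • π₁ + (2 : ℝ)⁻¹ • π₂).prod (ε⁻¹ • π₁ - (2 : ℝ)⁻¹ • π₂))
    (((ε / 2) • (π₁ + π₂)).prod (π₁ - π₂))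
    (fun p ↦ Prod.ext
      (show (ε / 2) • ((ε⁻¹ • p.1 + (2 : ℝ)⁻¹ • p.2) + (ε⁻¹ • p.1 - (2 : ℝ)⁻¹ • p.2)) = p.1 by
        match_scalars <;> field_simp <;> norm_num)
      (show (ε⁻¹ • p.1 + (2 : ℝ)⁻¹ • p.2) - (ε⁻¹ • p.1 - (2 : ℝ)⁻¹ • p.2) = p.2 by module))
    (fun q ↦ Prod.ext
      (show ε⁻¹ • (ε / 2) • (q.1 + q.2) + (2 : ℝ)⁻¹ • (q.1 - q.2) = q.1 by
        match_scalars <;> field_simp <;> norm_num)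
      (show ε⁻¹ • (ε / 2) • (q.1 + q.2) - (2 : ℝ)⁻¹ • (q.1 - q.2) = q.2 by
        match_scalars <;> field_simp <;> norm_num))

theorem wignerCoordinates_symm_apply (ε : ℝ) (hε : ε ≠ 0) (q : E × E) :
    (wignerCoordinates E ε hε).symm q = ((ε / 2) • (q.1 + q.2), q.1 - q.2) := rfl

/-- The rescaling `(x, ξ) ↦ (x, ξ/(2π))`, which passes from Mathlib's Fourier kernel
`exp (-2πi⟪y, ξ⟫)` to `exp (-i⟪y, ξ⟫)`. -/
def scaleSnd (D E : Type*) [NormedAddCommGroup D] [NormedSpace ℝ D] [NormedAddCommGroup E]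
    [NormedSpace ℝ E] : (D × E) ≃L[ℝ] D × E :=
  (ContinuousLinearEquiv.refl ℝ D).prodCongr
    (.smulLeft (Units.mk0 (2 * π) Real.two_pi_pos.ne')⁻¹)

end SchwartzEquivalences

section FourierScaling

open scoped FourierTransform

variable {E V : Type*} [NormedAddCommGroup E] [InnerProductSpace ℝ E] [FiniteDimensional ℝ E]
  [MeasurableSpace E] [BorelSpace E] [NormedAddCommGroup V] [NormedSpace ℂ V]

theorem fourier_inv_two_pi_smul (g : E → V) (ξ : E) :
    𝓕 g ((2 * π)⁻¹ • ξ) = ∫ y, cexp (-I * (inner ℝ y ξ : ℝ)) • g y := by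
  rw [Real.fourier_eq']
  congr! 4 with y
  rw [inner_smul_right]
  push_cast
  field_simp

theorem fourier_comp_two_pi_smul (g : E → V) (y : E) :
    𝓕 (fun η ↦ g ((2 * π) • η)) y =
      ((2 * π) ^ Module.finrank ℝ E)⁻¹ • ∫ η, cexp (-I * (inner ℝ y η : ℝ)) • g η := by
  have hchange := Measure.integral_comp_smul volume
    (fun η ↦ cexp (-I * (inner ℝ y η : ℝ)) • g η) (2 * π)
  rw [abs_of_pos (by positivity)] at hchange
  rw [← hchange, Real.fourier_eq']
  congr! 4 with η
  rw [inner_smul_right, real_inner_comm]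
  push_cast
  ring

end FourierScaling

section MagneticWigner

variable {d : ℕ} {A : Ed d → Ed d}

theorem IsPolyVF.hasTemperateGrowth (hA : IsPolyVF A) : A.HasTemperateGrowth := by
  refine ⟨hA.1, fun n ↦ ?_⟩
  obtain ⟨C, k, h⟩ := hA.2 n
  exact ⟨k, C, h⟩

theorem lineInt_symm (A : Ed d → Ed d) (x y : Ed d) : lineInt A y x = -lineInt A x y := by
  have hreverse := intervalIntegral.integral_comp_sub_left (a := 0) (b := 1)
    (fun s : ℝ ↦ inner ℝ (A (y + s • (x - y))) (x - y)) 1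
  rw [sub_self, sub_zero] at hreverse
  rw [lineInt, lineInt, ← hreverse, ← intervalIntegral.integral_neg]
  congr! 2 with s
  rw [show y + (1 - s) • (x - y) = x + s • (y - x) by module, ← neg_sub y x, inner_neg_right]

theorem IsPolyVF.hasTemperateGrowth_lineInt (hA : IsPolyVF A) :
    (fun q : Ed d × Ed d ↦ lineInt A q.1 q.2).HasTemperateGrowth := by
  let π₁ := ContinuousLinearMap.fst ℝ ℝ (Ed d × Ed d)
  let π₂ := ContinuousLinearMap.snd ℝ ℝ (Ed d × Ed d)
  let source := (ContinuousLinearMap.fst ℝ (Ed d) (Ed d)).comp π₂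
  let target := (ContinuousLinearMap.snd ℝ (Ed d) (Ed d)).comp π₂
  have hdir := (target - source).hasTemperateGrowth
  have hpoint := source.hasTemperateGrowth.add (π₁.hasTemperateGrowth.smul hdir)
  exact hasTemperateGrowth_intervalIntegral
    ((innerSL ℝ).bilinear_hasTemperateGrowth (hA.hasTemperateGrowth.comp hpoint) hdir) 0 1

/-- The magnetic phase `exp (-i c Γ_A (x - εy/2, x + εy/2))` in center and relative position
coordinates; the magnetic Wigner transform has `c = λ/ε`. -/
def magneticPhase (c ε : ℝ) (A : Ed d → Ed d) (p : Ed d × Ed d) : ℂ :=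
  cexp (-I * (c * lineInt A (p.1 - (ε / 2) • p.2) (p.1 + (ε / 2) • p.2) : ℝ))

theorem hasTemperateGrowth_magneticPhase (c ε : ℝ) (hA : IsPolyVF A) :
    (magneticPhase c ε A).HasTemperateGrowth := by
  let endpoints : Ed d × Ed d →L[ℝ] Ed d × Ed d :=
    let π₁ := ContinuousLinearMap.fst ℝ (Ed d) (Ed d)
    let π₂ := ContinuousLinearMap.snd ℝ (Ed d) (Ed d)
    (π₁ - (ε / 2) • π₂).prod (π₁ + (ε / 2) • π₂)
  have hline := hA.hasTemperateGrowth_lineInt.comp endpoints.hasTemperateGrowth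
  exact hasTemperateGrowth_cexp_neg_I_mul ((Function.HasTemperateGrowth.const c).mul hline)

theorem magneticPhase_mul_magneticPhase_neg (c ε : ℝ) (A : Ed d → Ed d) :
    magneticPhase c ε A * magneticPhase (-c) ε A = 1 := by
  ext p
  simp [magneticPhase, ← Complex.exp_add]

theorem magneticPhase_neg_wignerCoordinates_symm (c ε : ℝ) (hε : ε ≠ 0) (A : Ed d → Ed d)
    (q : Ed d × Ed d) :
    magneticPhase (-c) ε A ((wignerCoordinates (Ed d) ε hε).symm q) =
      cexp (-I * (c * lineInt A (ε • q.1) (ε • q.2) : ℝ)) := by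
  rw [magneticPhase, wignerCoordinates_symm_apply,
    show (ε / 2) • (q.1 + q.2) - (ε / 2) • (q.1 - q.2) = ε • q.2 by module,
    show (ε / 2) • (q.1 + q.2) + (ε / 2) • (q.1 - q.2) = ε • q.1 by module,
    lineInt_symm, neg_mul_neg]

variable {V : Type*} [NormedAddCommGroup V] [NormedSpace ℂ V] [CompleteSpace V]

/-- The magnetic Wigner transform with phase constant `c`: a change to center and relative
position coordinates, multiplication by the magnetic phase, and a partial Fourier transform. -/
def magneticWignerCLE (c ε : ℝ) (hε : ε ≠ 0) (hA : IsPolyVF A) :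
    𝓢(Ed d × Ed d, V) ≃L[ℂ] 𝓢(Ed d × Ed d, V) :=
  (compCLE (wignerCoordinates (Ed d) ε hε)).trans <|
    (smulCLE (magneticPhase c ε A) (magneticPhase (-c) ε A)
      (hasTemperateGrowth_magneticPhase c ε hA) (hasTemperateGrowth_magneticPhase (-c) ε hA)
      (magneticPhase_mul_magneticPhase_neg c ε A)).trans <|
    partialFourierCLE.trans (compCLE (scaleSnd (Ed d) (Ed d)))

open scoped FourierTransform

theorem magneticWignerCLE_apply (c ε : ℝ) (hε : ε ≠ 0) (hA : IsPolyVF A)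
    (K : 𝓢(Ed d × Ed d, V)) (p : Ed d × Ed d) :
    magneticWignerCLE c ε hε hA K p =
      ∫ y, (cexp (-I * (inner ℝ y p.2 : ℝ)) * magneticPhase c ε A (p.1, y)) •
        K (ε⁻¹ • p.1 + (2 : ℝ)⁻¹ • y, ε⁻¹ • p.1 - (2 : ℝ)⁻¹ • y) := by
  change 𝓕 (fun y ↦ smulLeftCLM V (magneticPhase c ε A)
    (compCLE (wignerCoordinates (Ed d) ε hε) K) (p.1, y)) ((2 * π)⁻¹ • p.2) = _
  simp only [fourier_inv_two_pi_smul, mul_smul,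
    smulLeftCLM_apply_apply (hasTemperateGrowth_magneticPhase c ε hA)]
  rfl

theorem magneticWignerCLE_symm_apply (c ε : ℝ) (hε : ε ≠ 0) (hA : IsPolyVF A)
    (f : 𝓢(Ed d × Ed d, V)) (q : Ed d × Ed d) :
    (magneticWignerCLE c ε hε hA).symm f q =
      cexp (-I * (c * lineInt A (ε • q.1) (ε • q.2) : ℝ)) • ((2 * π) ^ d)⁻¹ •
        ∫ η, cexp (-I * (inner ℝ (q.2 - q.1) η : ℝ)) • f ((ε / 2) • (q.1 + q.2), η) := by
  change smulLeftCLM V (magneticPhase (-c) ε A)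
    (partialFourierInvCLM (compCLE (scaleSnd (Ed d) (Ed d)).symm f))
      ((wignerCoordinates (Ed d) ε hε).symm q) = _
  have hfourier := fourier_comp_two_pi_smul
    (fun η ↦ f ((ε / 2) • (q.1 + q.2), η)) (q.2 - q.1)
  rw [finrank_euclideanSpace_fin] at hfourier
  rw [smulLeftCLM_apply_apply (hasTemperateGrowth_magneticPhase (-c) ε hA),
    magneticPhase_neg_wignerCoordinates_symm, ← hfourier, ← neg_sub q.1 q.2]
  rfl

end MagneticWigner

theorem statement_3_general {d : ℕ} (ε lam : ℝ) (hε : ε ≠ 0) {H H' : Type*}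
    [NormedAddCommGroup H] [NormedSpace ℂ H]
    [NormedAddCommGroup H'] [NormedSpace ℂ H'] [CompleteSpace H']
    (A : Ed d → Ed d) (hA : IsPolyVF A) :
    ∃ W : 𝓢(Ed d × Ed d, H →L[ℂ] H') ≃L[ℂ] 𝓢(Ed d × Ed d, H →L[ℂ] H'),
      (∀ (K : 𝓢(Ed d × Ed d, H →L[ℂ] H')) (p : Ed d × Ed d),
        W K p = wignerT ε lam A K p) ∧
      (∀ (f : 𝓢(Ed d × Ed d, H →L[ℂ] H')) (q : Ed d × Ed d),
        W.symm f q = magKernel ε lam A f q) :=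
  ⟨magneticWignerCLE (lam / ε) ε hε hA, magneticWignerCLE_apply (lam / ε) ε hε hA,
    magneticWignerCLE_symm_apply (lam / ε) ε hε hA⟩

theorem statement_3 {d : ℕ} (ε lam : ℝ) (hε : 0 < ε) (hlam : 0 < lam)
    {H H' : Type*}
    [NormedAddCommGroup H] [InnerProductSpace ℂ H] [CompleteSpace H]
    [TopologicalSpace.SeparableSpace H]
    [NormedAddCommGroup H'] [InnerProductSpace ℂ H'] [CompleteSpace H']
    [TopologicalSpace.SeparableSpace H']
    (A : Ed d → Ed d) (hA : IsPolyVF A) :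
    ∃ W : SchwartzMap (Ed d × Ed d) (H →L[ℂ] H') ≃L[ℂ]
        SchwartzMap (Ed d × Ed d) (H →L[ℂ] H'),
      (∀ (K : SchwartzMap (Ed d × Ed d) (H →L[ℂ] H')) (p : Ed d × Ed d),
        W K p = wignerT ε lam A (⇑K) p) ∧
      (∀ (f : SchwartzMap (Ed d × Ed d) (H →L[ℂ] H')) (q : Ed d × Ed d),
        W.symm f q = magKernel ε lam A (⇑f) q) := by
  exact statement_3_general ε lam hε.ne' A hA

end
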